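/- Let W > 0, let f ∈ L¹(ℝ) be nonzero with distributional Fourier transform supported in [−πW, πW], and let Ω ⊆ ℝ be measurable with ρ_ℝ(Ω,W) = W · sup_{t∈ℝ} |Ω ∩ [t, t+1/W]| < 1/π. Let N ∈ L¹(ℝ) vanish a.e. outside Ω. Then f is the unique minimizer, over all g ∈ L¹(ℝ) with Fourier transform supported in [−πW, πW], of g ↦ ‖(f+N) − g‖_{L¹(ℝ)}: for every such g, ‖N‖₁ ≤ ‖(f+N) − g‖₁, with strict inequality whenever g ≠ f in L¹(ℝ). -/

import Mathlib

open MeasureTheory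

/-- Absolute values of the tail sums. -/
noncomputable def bCoef (n : ℕ) : ℝ := ∑' j : ℕ, (-1 : ℝ) ^ j * (1 / (2 * ((n + j : ℕ) : ℝ) + 1) ^ 2)

lemma summable_odd_sq : Summable (fun n : ℕ => 1 / (2 * (n : ℝ) + 1) ^ 2) := by
  have h := (Real.summable_one_div_nat_pow (p := 2)).2 (by norm_num)
  have h2 := h.comp_injective (i := fun n : ℕ => 2 * n + 1) (fun a b hab => by simpa using hab)
  refine h2.congr (fun n => ?_)
  simp

lemma bCoef_summable (n : ℕ) :
    Summable (fun j : ℕ => 1 / (2 * ((n + j : ℕ) : ℝ) + 1) ^ 2) := by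
  have := (summable_nat_add_iff n).2 summable_odd_sq
  refine this.congr (fun j => ?_)
  rw [add_comm j n]

lemma bCoef_nonneg (n : ℕ) : 0 ≤ bCoef n := by
  have h := (bCoef_summable n).tendsto_alternating_series_tsum
  have hanti : Antitone (fun j : ℕ => 1 / (2 * ((n + j : ℕ) : ℝ) + 1) ^ 2) := by
    intro i j hij
    dsimp only
    gcongr
  have h0 := hanti.alternating_series_le_tendsto h 0
  rw [mul_zero, Finset.sum_range_zero] at h0
  exact h0

lemma bCoef_add (n : ℕ) : bCoef n + bCoef (n + 1) = 1 / (2 * (n : ℝ) + 1) ^ 2 := by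
  have h := (bCoef_summable n).alternating
  unfold bCoef
  rw [h.tsum_eq_zero_add]
  have : ∀ j : ℕ, (-1 : ℝ) ^ (j + 1) * (1 / (2 * ((n + (j + 1) : ℕ) : ℝ) + 1) ^ 2)
      = - ((-1 : ℝ) ^ j * (1 / (2 * ((n + 1 + j : ℕ) : ℝ) + 1) ^ 2)) := by
    intro j
    rw [show n + (j + 1) = n + 1 + j by ring]
    ring
  simp_rw [this, tsum_neg]
  simp

lemma bCoef_le (n : ℕ) : bCoef n ≤ 1 / (2 * (n : ℝ) + 1) ^ 2 := by
  have := bCoef_add n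
  have := bCoef_nonneg (n + 1)
  linarith

lemma bCoef_summ : Summable bCoef :=
  Summable.of_nonneg_of_le bCoef_nonneg bCoef_le summable_odd_sq

/-- Fourier coefficients of `x / sin x` on `[-π/2, π/2]`. -/
noncomputable def cCoef (n : ℤ) : ℝ := 4 / Real.pi * (-1) ^ n.natAbs * bCoef n.natAbs

lemma abs_cCoef (n : ℤ) : |cCoef n| = 4 / Real.pi * bCoef n.natAbs := by
  unfold cCoef
  rw [abs_mul, abs_mul, abs_pow, abs_neg, abs_one, one_pow, mul_one,
    abs_of_nonneg (bCoef_nonneg _), abs_of_nonneg (by positivity)]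

lemma cCoef_summ : Summable (fun n => |cCoef n|) := by
  simp_rw [abs_cCoef]
  apply Summable.mul_left
  apply Summable.of_nat_of_neg
  · simpa using bCoef_summ
  · simpa using bCoef_summ

lemma cCoef_sub_nat (n : ℕ) :
    cCoef n - cCoef (n + 1) = 4 / Real.pi * ((-1) ^ n * (1 / (2 * (n : ℝ) + 1) ^ 2)) := by
  unfold cCoef
  rw [← bCoef_add]
  have : ((n : ℤ) + 1).natAbs = n + 1 := by omega
  rw [this, Int.natAbs_natCast]
  ring

lemma cCoef_neg (n : ℤ) : cCoef (-n) = cCoef n := by simp [cCoef]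

/-- triangle wave -/
lemma hasSum_triangle_cos {y : ℝ} (h0 : 0 ≤ y) (h1 : y ≤ Real.pi) :
    HasSum (fun n : ℕ => 1 / (2 * (n : ℝ) + 1) ^ 2 * Real.cos ((2 * n + 1) * y))
      (Real.pi ^ 2 / 8 - Real.pi * y / 4) := by
  have hpi := Real.pi_pos
  have hB : ∀ x : ℝ, (Polynomial.map (algebraMap ℚ ℝ) (Polynomial.bernoulli 2)).eval x
      = x ^ 2 - x + 1 / 6 := by
    intro x
    simp [Polynomial.bernoulli, Finset.sum_range_succ, Polynomial.eval_add, Polynomial.map_add,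
      bernoulli_eq_bernoulli'_of_ne_one]
    ring
  have hA := hasSum_one_div_nat_pow_mul_cos (k := 1) one_ne_zero (x := y / (2 * Real.pi))
    ⟨by positivity, by rw [div_le_one (by positivity)]; linarith⟩
  have hC := hasSum_one_div_nat_pow_mul_cos (k := 1) one_ne_zero (x := y / Real.pi)
    ⟨by positivity, by rw [div_le_one (by positivity)]; linarith⟩
  simp only [mul_one, hB] at hA hC
  have hE := hC.mul_left (1 / 4)
  have hEe : (fun n : ℕ => 1 / 4 * (1 / (n : ℝ) ^ 2 * Real.cos (2 * Real.pi * n * (y / Real.pi))))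
      = (fun n : ℕ => 1 / ((2 * n : ℕ) : ℝ) ^ 2 *
      Real.cos (2 * Real.pi * ((2 * n : ℕ) : ℝ) * (y / (2 * Real.pi)))) := by
    ext n
    have : 2 * Real.pi * ((2 * n : ℕ) : ℝ) * (y / (2 * Real.pi))
        = 2 * Real.pi * n * (y / Real.pi) := by
      push_cast
      field_simp
    rw [this]
    push_cast
    ring
  rw [hEe] at hE
  have hO : Summable (fun n : ℕ => 1 / ((2 * n + 1 : ℕ) : ℝ) ^ 2 *
      Real.cos (2 * Real.pi * ((2 * n + 1 : ℕ) : ℝ) * (y / (2 * Real.pi)))) :=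
    hA.summable.comp_injective (i := fun n : ℕ => 2 * n + 1) (fun a b hab => by simpa using hab)
  have hO' := hO.hasSum
  set T := ∑' n : ℕ, 1 / ((2 * n + 1 : ℕ) : ℝ) ^ 2 *
      Real.cos (2 * Real.pi * ((2 * n + 1 : ℕ) : ℝ) * (y / (2 * Real.pi))) with hTdef
  have hAO := HasSum.even_add_odd (f := fun n : ℕ => 1 / (n : ℝ) ^ 2 *
      Real.cos (2 * Real.pi * (n : ℝ) * (y / (2 * Real.pi)))) hE hO'
  have hTT := hAO.unique hA
  have hval : T = Real.pi ^ 2 / 8 - Real.pi * y / 4 := by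
    rw [← eq_sub_iff_add_eq'] at hTT
    rw [hTT, Nat.factorial_two]
    field_simp
    push_cast
    ring
  rw [← hval]
  refine hO'.congr_fun (fun n => ?_)
  have : 2 * Real.pi * ((2 * n + 1 : ℕ) : ℝ) * (y / (2 * Real.pi)) = (2 * n + 1) * y := by
    push_cast
    field_simp
  rw [this]
  push_cast
  rfl

lemma hasSum_triangle {x : ℝ} (h0 : |x| ≤ Real.pi / 2) :
    HasSum (fun n : ℕ => 1 / (2 * (n : ℝ) + 1) ^ 2 * ((-1) ^ n * Real.sin ((2 * n + 1) * x)))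
      (Real.pi * x / 4) := by
  obtain ⟨ha, hb⟩ := abs_le.1 h0
  convert hasSum_triangle_cos (y := Real.pi / 2 - x) (by linarith) (by linarith) using 1
  · ext n
    congr 1
    rw [show (2 * (n : ℝ) + 1) * (Real.pi / 2 - x) = Real.pi / 2 - (2 * n + 1) * x + n * Real.pi by ring,
      Real.cos_add_nat_mul_pi, Real.cos_pi_div_two_sub]
  · ring

lemma hasSum_S_mul_sin {x : ℝ} (h0 : |x| ≤ Real.pi / 2) :
    (∑' n : ℤ, (cCoef n : ℂ) * Complex.exp (2 * Complex.I * n * x)) * Real.sin x = x := by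
  have hcs : ∀ (a : ℤ → ℝ), Summable (fun n => |cCoef n|) →
      Summable (fun n : ℤ => (cCoef n : ℂ) * Complex.exp (a n * Complex.I)) := by
    intro a h
    refine Summable.of_norm ?_
    refine h.congr (fun n => ?_)
    rw [norm_mul, Complex.norm_exp_ofReal_mul_I, mul_one, Complex.norm_real, Real.norm_eq_abs]
  have hA := hcs (fun n => (2 * n + 1) * x) cCoef_summ
  have hB := hcs (fun n => (2 * n - 1) * x) cCoef_summ
  have hS : ∀ n : ℤ, (cCoef n : ℂ) * Complex.exp (2 * Complex.I * n * x) * Real.sin x =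
      ((cCoef n : ℂ) * Complex.exp (((2 * n + 1) * x : ℝ) * Complex.I)
      - (cCoef n : ℂ) * Complex.exp (((2 * n - 1) * x : ℝ) * Complex.I)) / (2 * Complex.I) := by
    intro n
    rw [Complex.ofReal_sin, Complex.sin,
      show (((2 * n + 1) * x : ℝ) : ℂ) * Complex.I = 2 * Complex.I * n * x + x * Complex.I by
        push_cast; ring,
      show (((2 * n - 1) * x : ℝ) : ℂ) * Complex.I = 2 * Complex.I * n * x + -x * Complex.I by
        push_cast; ring, Complex.exp_add, Complex.exp_add]
    field_simp
    rw [Complex.I_sq]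
    ring
  have hB' := hB.hasSum
  rw [← (Equiv.addRight (1 : ℤ)).hasSum_iff] at hB'
  have hD := (hA.hasSum.sub hB').nat_add_neg_add_one
  have hT := (Complex.hasSum_ofReal.2 (hasSum_triangle h0)).mul_left (8 * Complex.I / Real.pi)
  have heq := hD.unique (hT.congr_fun ?_)
  · rw [← tsum_mul_right]
    simp_rw [hS]
    rw [tsum_div_const, hA.tsum_sub hB, heq]
    have := Real.pi_ne_zero
    push_cast
    field_simp
    ring
  · intro n
    have h1 := cCoef_sub_nat n
    have e1 : (Equiv.addRight (1 : ℤ)) (n : ℤ) = n + 1 := rfl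
    have e2 : (Equiv.addRight (1 : ℤ)) (-((n : ℤ) + 1)) = -(n : ℤ) := by
      simp [Equiv.addRight]
    simp only [Function.comp, e1, e2, cCoef_neg]
    push_cast
    have h2 : (cCoef n : ℂ) - cCoef (n + 1)
        = 4 / Real.pi * ((-1) ^ n * (1 / (2 * (n : ℂ) + 1) ^ 2)) := by
      rw [← Complex.ofReal_sub, h1]
      push_cast
      rfl
    rw [show (2 * ((n : ℂ) + 1) - 1) * (x : ℂ) * Complex.I = (2 * n + 1) * x * Complex.I by ring,
      show (2 * -((n : ℂ) + 1) + 1) * (x : ℂ) * Complex.I = -((2 * n + 1) * x) * Complex.I by ring,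
      show (2 * -(n : ℂ) - 1) * (x : ℂ) * Complex.I = -((2 * n + 1) * x) * Complex.I by ring]
    have hs : 2 * Complex.I * Complex.sin ((2 * n + 1) * x) =
        Complex.exp ((2 * n + 1) * x * Complex.I) - Complex.exp (-((2 * n + 1) * x) * Complex.I) := by
      rw [Complex.sin]
      ring_nf
      rw [Complex.I_sq]
      ring
    linear_combination (Complex.exp ((2 * n + 1) * x * Complex.I) -
      Complex.exp (-((2 * n + 1) * x) * Complex.I)) * h2
      - 4 / Real.pi * ((-1) ^ n * (1 / (2 * (n : ℂ) + 1) ^ 2)) * hs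

lemma tsum_abs_cCoef : ∑' n : ℤ, |cCoef n| = Real.pi / 2 := by
  have h := hasSum_S_mul_sin (x := Real.pi / 2) (by rw [abs_of_nonneg (by positivity)])
  rw [Real.sin_pi_div_two] at h
  have : ∀ n : ℤ, (cCoef n : ℂ) * Complex.exp (2 * Complex.I * n * (Real.pi / 2 : ℝ)) = (|cCoef n| : ℝ) := by
    intro n
    rw [show (2 * Complex.I * n * (Real.pi / 2 : ℝ)) = n * (Real.pi * Complex.I) by push_cast; ring,
      Complex.exp_int_mul, Complex.exp_pi_mul_I, abs_cCoef]
    have : (-1 : ℂ) ^ n = (-1) ^ n.natAbs := by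
      obtain ⟨m, rfl | rfl⟩ := n.eq_nat_or_neg <;> simp [← inv_pow]
    rw [this, cCoef]
    push_cast
    have : ((-1 : ℂ) ^ n.natAbs) * ((-1 : ℂ) ^ n.natAbs) = 1 := by
      rw [← mul_pow]; simp
    linear_combination (4 / Real.pi * bCoef n.natAbs : ℂ) * this
  simp_rw [this] at h
  rw [← Complex.ofReal_tsum, Complex.ofReal_one, mul_one] at h
  exact_mod_cast h

open FourierTransform in
/-- Uniqueness of the Fourier transform on `L¹`. -/
lemma ae_zero_of_fourier {u : ℝ → ℂ} (hu : Integrable u) (h : ∀ w : ℝ, w ≠ 0 → 𝓕 u w = 0) :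
    ∀ᵐ t, u t = 0 := by
  apply ae_eq_zero_of_integral_contDiff_smul_eq_zero hu.locallyIntegrable
  intro g hg hgs
  have hg' : ContDiff ℝ (⊤ : ℕ∞) (fun t => (g t : ℂ)) := Complex.ofRealCLM.contDiff.comp hg
  have hgs' : HasCompactSupport (fun t => (g t : ℂ)) := hgs.comp_left (g := fun x : ℝ => (x : ℂ)) (by simp)
  let G : SchwartzMap ℝ ℂ := hgs'.toSchwartzMap hg'
  let P : SchwartzMap ℝ ℂ := 𝓕⁻ G
  have hP : 𝓕 P = G := fourier_fourierInv_eq G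
  have key := VectorFourier.integral_fourierIntegral_smul_eq_flip (e := Real.fourierChar)
    (L := innerₗ ℝ) (μ := volume) (ν := volume) (f := u) (g := P) Real.continuous_fourierChar
    continuous_inner hu P.integrable
  have h1 : ∀ x, VectorFourier.fourierIntegral Real.fourierChar volume (innerₗ ℝ).flip P x = g x := by
    intro x
    have : (𝓕 P) x = (g x : ℂ) := by rw [hP]; rfl
    rw [← this, SchwartzMap.fourier_coe, flip_innerₗ]
    rfl
  simp_rw [h1] at key
  have h2 : ∫ ξ, VectorFourier.fourierIntegral Real.fourierChar volume (innerₗ ℝ) u ξ • P ξ = 0 := by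
    apply integral_eq_zero_of_ae
    have : ∀ᵐ w : ℝ, w ≠ 0 := by simp [ae_iff]
    filter_upwards [this] with w hw
    have : VectorFourier.fourierIntegral Real.fourierChar volume (innerₗ ℝ) u w = 0 := h w hw
    simp [this]
  rw [h2] at key
  rw [key]
  congr 1
  ext t
  simp [mul_comm]

/-- Normalized box. -/
noncomputable def boxF (W : ℝ) : ℝ → ℂ :=
  Set.indicator (Set.Icc (-(1 / (2 * W))) (1 / (2 * W))) (fun _ => (W : ℂ))

lemma boxF_integrable (W : ℝ) : Integrable (boxF W) := by
  unfold boxF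
  rw [integrable_indicator_iff measurableSet_Icc]
  exact integrableOn_const (by simp)

lemma boxF_norm_le {W : ℝ} (hW : 0 < W) (t : ℝ) : ‖boxF W t‖ ≤ W := by
  unfold boxF
  refine (norm_indicator_le_norm_self _ _).trans ?_
  simp [abs_of_pos hW]

open FourierTransform in
lemma boxF_fourier {W : ℝ} (hW : 0 < W) {w : ℝ} (hw : w ≠ 0) :
    𝓕 (boxF W) w * (Real.pi * w / W : ℝ) = Real.sin (Real.pi * w / W) := by
  rw [Real.fourier_real_eq_integral_exp_smul]
  have h1 : ∀ v : ℝ, Complex.exp ((-2 * Real.pi * v * w : ℝ) * Complex.I) • boxF W v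
      = Set.indicator (Set.Icc (-(1 / (2 * W))) (1 / (2 * W)))
        (fun v : ℝ => Complex.exp ((-2 * Real.pi * w * Complex.I) * v) * (W : ℂ)) v := by
    intro v
    unfold boxF
    by_cases hv : v ∈ Set.Icc (-(1 / (2 * W))) (1 / (2 * W))
    · rw [Set.indicator_of_mem hv, Set.indicator_of_mem hv, smul_eq_mul]
      congr 2
      push_cast
      ring
    · rw [Set.indicator_of_notMem hv, Set.indicator_of_notMem hv, smul_zero]
  simp_rw [h1]
  have hpi : (Real.pi : ℂ) ≠ 0 := by exact_mod_cast Real.pi_ne_zero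
  have hw' : (w : ℂ) ≠ 0 := by exact_mod_cast hw
  have hW' : (W : ℂ) ≠ 0 := by exact_mod_cast hW.ne'
  have hI := Complex.I_ne_zero
  have h0 : (-2 * Real.pi * w * Complex.I : ℂ) ≠ 0 := by
    simp [hw, Real.pi_ne_zero]
  rw [integral_indicator measurableSet_Icc, integral_Icc_eq_integral_Ioc,
    ← intervalIntegral.integral_of_le (by linarith [show 0 < 1 / (2 * W) by positivity]),
    intervalIntegral.integral_mul_const, integral_exp_mul_complex h0, Complex.ofReal_sin, Complex.sin]
  push_cast
  rw [show (-2 * Real.pi * w * Complex.I : ℂ) * (1 / (2 * W)) = -(Real.pi * w / W) * Complex.I by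
      field_simp,
    show (-2 * Real.pi * w * Complex.I : ℂ) * (-(1 / (2 * W))) = (Real.pi * w / W) * Complex.I by
      field_simp]
  generalize Complex.exp (-(Real.pi * w / W) * Complex.I) = A
  generalize Complex.exp ((Real.pi * w / W) * Complex.I) = B
  field_simp
  rw [Complex.I_sq]
  ring

/-- Moving average of `h`. -/
noncomputable def kF (W : ℝ) (h : ℝ → ℂ) : ℝ → ℂ :=
  convolution h (boxF W) (ContinuousLinearMap.mul ℂ ℂ) volume

lemma kF_apply (W : ℝ) (h : ℝ → ℂ) (t : ℝ) : kF W h t = ∫ s, h s * boxF W (t - s) := rfl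

lemma kF_integrable (W : ℝ) {h : ℝ → ℂ} (hh : Integrable h) : Integrable (kF W h) :=
  hh.integrable_convolution _ (boxF_integrable W)

lemma kF_norm_le {W : ℝ} (hW : 0 < W) {h : ℝ → ℂ} (hh : Integrable h) (t : ℝ) :
    ‖kF W h t‖ ≤ ∫ s, ‖h s‖ * W := by
  rw [kF_apply]
  refine norm_integral_le_of_norm_le (hh.norm.mul_const W) (Filter.Eventually.of_forall fun s => ?_)
  rw [norm_mul]
  exact mul_le_mul_of_nonneg_left (boxF_norm_le hW _) (norm_nonneg _)

lemma kF_lintegral {W : ℝ} (hW : 0 < W) {h : ℝ → ℂ} (hh : Integrable h) {Ω : Set ℝ}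
    (hΩ : MeasurableSet Ω) {M : ENNReal}
    (hM : ∀ t, volume (Ω ∩ Set.Icc t (t + 1 / W)) ≤ M) :
    ∫⁻ t in Ω, ‖kF W h t‖ₑ ≤ (∫⁻ s, ‖h s‖ₑ) * (ENNReal.ofReal W * M) := by
  have hmb : Measurable (boxF W) := by
    unfold boxF
    exact measurable_const.indicator measurableSet_Icc
  calc ∫⁻ t in Ω, ‖kF W h t‖ₑ ≤ ∫⁻ t in Ω, ∫⁻ s, ‖h s‖ₑ * ‖boxF W (t - s)‖ₑ := by
        refine lintegral_mono fun t => ?_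
        rw [kF_apply]
        refine (enorm_integral_le_lintegral_enorm _).trans_eq ?_
        simp_rw [enorm_mul]
    _ = ∫⁻ s, ∫⁻ t in Ω, ‖h s‖ₑ * ‖boxF W (t - s)‖ₑ := by
        apply lintegral_lintegral_swap
        have hA : AEMeasurable (fun p : ℝ × ℝ => ‖h p.2‖ₑ) ((volume.restrict Ω).prod volume) :=
          hh.aestronglyMeasurable.enorm.comp_snd
        have hB : AEMeasurable (fun p : ℝ × ℝ => ‖boxF W (p.1 - p.2)‖ₑ)
            ((volume.restrict Ω).prod volume) :=
          (hmb.comp (measurable_fst.sub measurable_snd)).enorm.aemeasurable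
        exact hA.mul hB
    _ ≤ ∫⁻ s, ‖h s‖ₑ * (ENNReal.ofReal W * M) := by
        refine lintegral_mono fun s => ?_
        dsimp only
        rw [lintegral_const_mul _ (by fun_prop)]
        gcongr
        have : ∀ t, ‖boxF W (t - s)‖ₑ = Set.indicator
            (Set.Icc (s - 1 / (2 * W)) (s - 1 / (2 * W) + 1 / W)) (fun _ => ENNReal.ofReal W) t := by
          intro t
          have hhalf : 1 / W = 1 / (2 * W) + 1 / (2 * W) := by field_simp; norm_num
          unfold boxF
          by_cases ht : t - s ∈ Set.Icc (-(1 / (2 * W))) (1 / (2 * W))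
          · rw [Set.indicator_of_mem ht, Set.indicator_of_mem]
            · rw [← ofReal_norm]
              simp [abs_of_pos hW]
            · rw [Set.mem_Icc] at ht ⊢
              constructor <;> linarith [ht.1, ht.2]
          · rw [Set.indicator_of_notMem ht, Set.indicator_of_notMem]
            · simp
            · intro ht'
              apply ht
              rw [Set.mem_Icc] at ht' ⊢
              constructor <;> linarith [ht'.1, ht'.2]
        simp_rw [this]
        rw [lintegral_indicator_const measurableSet_Icc, Measure.restrict_apply measurableSet_Icc,
          Set.inter_comm]
        gcongr
        exact hM _
    _ = _ := lintegral_mul_const'' _ hh.aestronglyMeasurable.enorm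

/-- The reconstruction of `h` from its moving averages. -/
noncomputable def vF (W : ℝ) (h : ℝ → ℂ) (t : ℝ) : ℂ :=
  ∑' n : ℤ, (cCoef n : ℂ) * kF W h (t + n / W)

lemma vF_lintegral {W : ℝ} (hW : 0 < W) {h : ℝ → ℂ} (hh : Integrable h) {Ω : Set ℝ}
    (hΩ : MeasurableSet Ω) {M : ENNReal}
    (hM : ∀ t, volume (Ω ∩ Set.Icc t (t + 1 / W)) ≤ M) :
    ∫⁻ t in Ω, ‖vF W h t‖ₑ ≤
      ENNReal.ofReal (Real.pi / 2) * ((∫⁻ s, ‖h s‖ₑ) * (ENNReal.ofReal W * M)) := by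
  have hk := kF_integrable W hh
  calc ∫⁻ t in Ω, ‖vF W h t‖ₑ
      ≤ ∫⁻ t in Ω, ∑' n : ℤ, ENNReal.ofReal |cCoef n| * ‖kF W h (t + n / W)‖ₑ := by
        refine lintegral_mono fun t => ?_
        refine enorm_tsum_le_tsum_enorm.trans_eq ?_
        congr 1
        ext n
        rw [enorm_mul, ← ofReal_norm (cCoef n : ℂ), Complex.norm_real, Real.norm_eq_abs]
    _ = ∑' n : ℤ, ENNReal.ofReal |cCoef n| * ∫⁻ t in Ω, ‖kF W h (t + n / W)‖ₑ := by
        have hm : ∀ n : ℤ, AEMeasurable (fun t => ‖kF W h (t + n / W)‖ₑ) (volume.restrict Ω) :=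
          fun n => (hk.comp_add_right _).aestronglyMeasurable.enorm.restrict
        rw [lintegral_tsum (fun n => (hm n).const_mul _)]
        congr 1
        ext n
        rw [lintegral_const_mul'' _ (hm n)]
    _ ≤ ∑' n : ℤ, ENNReal.ofReal |cCoef n| * ((∫⁻ s, ‖h s‖ₑ) * (ENNReal.ofReal W * M)) := by
        refine ENNReal.tsum_le_tsum fun n => ?_
        gcongr
        have hΩ' : MeasurableSet ((fun t => t - (n : ℝ) / W) ⁻¹' Ω) :=
          hΩ.preimage (measurable_id.sub_const _)
        refine le_trans (le_of_eq ?_) (kF_lintegral hW hh hΩ' (M := M) ?_)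
        · rw [← lintegral_indicator hΩ, ← lintegral_indicator hΩ',
            ← lintegral_add_right_eq_self (μ := volume) (Set.indicator
              ((fun t => t - (n : ℝ) / W) ⁻¹' Ω) _) ((n : ℝ) / W)]
          congr 1
          ext t
          have hiff : (t + (n : ℝ) / W ∈ (fun t => t - (n : ℝ) / W) ⁻¹' Ω) ↔ t ∈ Ω := by
            rw [Set.mem_preimage, add_sub_cancel_right]
          by_cases ht : t ∈ Ω
          · rw [Set.indicator_of_mem ht, Set.indicator_of_mem (hiff.2 ht)]
          · rw [Set.indicator_of_notMem ht, Set.indicator_of_notMem (fun h' => ht (hiff.1 h'))]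
        · intro t
          refine le_trans (le_of_eq ?_) (hM (t - n / W))
          rw [← measure_preimage_add_right volume ((n : ℝ) / W)]
          congr 1
          ext s
          simp only [Set.mem_preimage, Set.mem_inter_iff, Set.mem_Icc, add_sub_cancel_right]
          constructor
          · rintro ⟨h1, h2, h3⟩
            exact ⟨h1, by linarith, by linarith⟩
          · rintro ⟨h1, h2, h3⟩
            exact ⟨h1, by linarith, by linarith⟩
    _ = _ := by
        rw [ENNReal.tsum_mul_right, ← ENNReal.ofReal_tsum_of_nonneg (fun _ => abs_nonneg _) cCoef_summ,
          tsum_abs_cCoef]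

lemma vF_integrable {W : ℝ} (hW : 0 < W) {h : ℝ → ℂ} (hh : Integrable h) :
    Integrable (vF W h) := by
  have hk := kF_integrable W hh
  constructor
  · refine aestronglyMeasurable_of_tendsto_ae (Filter.atTop : Filter (Finset ℤ))
      (f := fun s t => ∑ n ∈ s, (cCoef n : ℂ) * kF W h (t + n / W)) ?_ ?_
    · intro s
      refine (integrable_finsetSum s fun n _ => ?_).aestronglyMeasurable
      exact (hk.comp_add_right _).const_mul _
    · refine Filter.Eventually.of_forall fun t => ?_
      have : Summable (fun n : ℤ => (cCoef n : ℂ) * kF W h (t + n / W)) := by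
        refine Summable.of_norm_bounded (cCoef_summ.mul_right (∫ s, ‖h s‖ * W)) fun n => ?_
        rw [norm_mul, Complex.norm_real, Real.norm_eq_abs]
        exact mul_le_mul_of_nonneg_left (kF_norm_le hW hh _) (abs_nonneg _)
      exact this.hasSum
  · have := vF_lintegral hW hh MeasurableSet.univ (M := ENNReal.ofReal (1 / W)) (by intro t; simp)
    rw [Measure.restrict_univ] at this
    refine lt_of_le_of_lt this ?_
    have h2 : ∫⁻ s, ‖h s‖ₑ < ⊤ := hh.2
    exact ENNReal.mul_lt_top ENNReal.ofReal_lt_top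
      (ENNReal.mul_lt_top h2 (ENNReal.mul_lt_top ENNReal.ofReal_lt_top ENNReal.ofReal_lt_top))

open FourierTransform in
lemma vF_fourier {W : ℝ} (hW : 0 < W) {h : ℝ → ℂ} (hh : Integrable h) (w : ℝ) :
    𝓕 (vF W h) w = (∑' n : ℤ, (cCoef n : ℂ) *
      Complex.exp (2 * Complex.I * n * (Real.pi * w / W : ℝ))) * (𝓕 h w * 𝓕 (boxF W) w) := by
  have hk := kF_integrable W hh
  rw [← Real.fourier_mul_convolution_eq hh (boxF_integrable W)]
  change _ = _ * 𝓕 (kF W h) w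
  let F : ℤ → ℝ → ℂ := fun n v => Complex.exp ((-2 * Real.pi * v * w : ℝ) * Complex.I) *
    ((cCoef n : ℂ) * kF W h (v + n / W))
  have hFn : ∀ n v, ‖F n v‖ = |cCoef n| * ‖kF W h (v + n / W)‖ := by
    intro n v
    simp only [F]
    rw [norm_mul, Complex.norm_exp_ofReal_mul_I, one_mul, norm_mul, Complex.norm_real,
      Real.norm_eq_abs]
  have hFi : ∀ n, Integrable (F n) := by
    intro n
    have h1 := (hk.comp_add_right ((n : ℝ) / W)).const_mul (cCoef n : ℂ)
    refine h1.bdd_mul (c := 1) ?_ ?_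
    · exact Continuous.aestronglyMeasurable (by fun_prop)
    · exact Filter.Eventually.of_forall fun v => by rw [Complex.norm_exp_ofReal_mul_I]
  have hFs : Summable fun n => ∫ v, ‖F n v‖ := by
    have : ∀ n, ∫ v, ‖F n v‖ = |cCoef n| * ∫ v, ‖kF W h v‖ := by
      intro n
      simp_rw [hFn]
      rw [integral_const_mul, integral_add_right_eq_self (fun v => ‖kF W h v‖)]
    simp_rw [this]
    exact cCoef_summ.mul_right _
  have hsum := integral_tsum_of_summable_integral_norm hFi hFs
  rw [Real.fourier_real_eq_integral_exp_smul, Real.fourier_real_eq_integral_exp_smul]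
  have hl : ∀ v : ℝ, Complex.exp ((-2 * Real.pi * v * w : ℝ) * Complex.I) • vF W h v
      = ∑' n, F n v := by
    intro v
    simp only [F, vF, smul_eq_mul]
    rw [tsum_mul_left]
  simp_rw [hl]
  rw [← hsum, ← tsum_mul_right]
  congr 1
  ext n
  rw [mul_assoc, ← integral_const_mul,
    ← integral_add_right_eq_self (fun v : ℝ =>
      Complex.exp (2 * Complex.I * n * (Real.pi * w / W : ℝ)) *
      (Complex.exp ((-2 * Real.pi * v * w : ℝ) * Complex.I) • kF W h v)) ((n : ℝ) / W)]
  rw [← integral_const_mul]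
  congr 1
  ext v
  simp only [F, smul_eq_mul]
  have : Complex.exp ((-2 * Real.pi * v * w : ℝ) * Complex.I) =
      Complex.exp (2 * Complex.I * n * (Real.pi * w / W : ℝ)) *
      Complex.exp ((-2 * Real.pi * (v + n / W) * w : ℝ) * Complex.I) := by
    rw [← Complex.exp_add]
    congr 1
    push_cast
    ring
  rw [this]
  ring

open FourierTransform in
lemma h_eq_vF {W : ℝ} (hW : 0 < W) {h : ℝ → ℂ} (hh : Integrable h)
    (hs : ∀ w : ℝ, W / 2 < |w| → 𝓕 h w = 0) : ∀ᵐ t, h t = vF W h t := by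
  have hv := vF_integrable hW hh
  have key := ae_zero_of_fourier (hh.sub hv) ?_
  · filter_upwards [key] with t ht
    exact sub_eq_zero.1 ht
  · intro w hw
    have hsub : 𝓕 (h - vF W h) w = 𝓕 h w - 𝓕 (vF W h) w := by
      simp only [Real.fourier_real_eq_integral_exp_smul, smul_eq_mul]
      rw [← integral_sub]
      · simp [mul_sub]
      · refine hh.bdd_mul (c := 1) ?_ ?_
        · exact Continuous.aestronglyMeasurable (by fun_prop)
        · exact Filter.Eventually.of_forall fun v => by rw [Complex.norm_exp_ofReal_mul_I]
      · refine hv.bdd_mul (c := 1) ?_ ?_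
        · exact Continuous.aestronglyMeasurable (by fun_prop)
        · exact Filter.Eventually.of_forall fun v => by rw [Complex.norm_exp_ofReal_mul_I]
    rw [hsub, vF_fourier hW hh]
    by_cases hw2 : W / 2 < |w|
    · rw [hs w hw2]; ring
    · have hpi := Real.pi_pos
      have hx : |Real.pi * w / W| ≤ Real.pi / 2 := by
        rw [abs_div, abs_mul, abs_of_pos hpi, abs_of_pos hW, div_le_iff₀ hW]
        push Not at hw2
        nlinarith
      have h1 := hasSum_S_mul_sin hx
      have h2 := boxF_fourier hW hw
      have h3 : ((Real.pi * w / W : ℝ) : ℂ) ≠ 0 := by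
        have : Real.pi * w / W ≠ 0 := by positivity
        exact_mod_cast this
      rw [← h2] at h1
      have h4 : (∑' n : ℤ, (cCoef n : ℂ) *
        Complex.exp (2 * Complex.I * n * (Real.pi * w / W : ℝ))) * 𝓕 (boxF W) w = 1 := by
        apply mul_right_cancel₀ h3
        rw [one_mul, mul_assoc]
        exact h1
      linear_combination -(𝓕 h w) * h4

lemma donoho_logan {W : ℝ} (hW : 0 < W) {h : ℝ → ℂ} (hh : Integrable h)
    (hs : ∀ ξ : ℝ, ξ ∉ Set.Icc (-(Real.pi * W)) (Real.pi * W) →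
      (∫ t : ℝ, h t * Complex.exp (-(Complex.I * ξ * t))) = 0)
    {Ω : Set ℝ} (hΩ : MeasurableSet Ω) :
    ∫ t in Ω, ‖h t‖ ≤ Real.pi / 2 *
      (W * (⨆ t : ℝ, (volume (Ω ∩ Set.Icc t (t + 1 / W))).toReal)) * ∫ t, ‖h t‖ := by
  have hpi := Real.pi_pos
  have hae := h_eq_vF hW hh (fun w hw => by
    have := hs (2 * Real.pi * w) (by
      rw [Set.mem_Icc, ← abs_le, abs_mul, abs_of_pos (by positivity)]
      push Not
      nlinarith)
    rw [Real.fourier_real_eq_integral_exp_smul, ← this]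
    congr 1
    ext t
    rw [smul_eq_mul, mul_comm]
    congr 2
    push_cast
    ring)
  set R := ⨆ t : ℝ, (volume (Ω ∩ Set.Icc t (t + 1 / W))).toReal with hR
  have hfin : ∀ t, volume (Ω ∩ Set.Icc t (t + 1 / W)) ≤ ENNReal.ofReal (1 / W) := fun t =>
    (measure_mono Set.inter_subset_right).trans (by simp)
  have hbdd : BddAbove (Set.range fun t : ℝ => (volume (Ω ∩ Set.Icc t (t + 1 / W))).toReal) := by
    refine ⟨1 / W, ?_⟩
    rintro _ ⟨t, rfl⟩
    exact ENNReal.toReal_le_of_le_ofReal (by positivity) (hfin t)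
  have hR0 : 0 ≤ R := Real.iSup_nonneg fun t => ENNReal.toReal_nonneg
  have hM : ∀ t, volume (Ω ∩ Set.Icc t (t + 1 / W)) ≤ ENNReal.ofReal R := by
    intro t
    rw [ENNReal.le_ofReal_iff_toReal_le (ne_top_of_le_ne_top ENNReal.ofReal_ne_top (hfin t)) hR0]
    exact le_ciSup hbdd t
  have h1 := vF_lintegral hW hh hΩ hM
  have h2 : ∫⁻ t in Ω, ‖h t‖ₑ = ∫⁻ t in Ω, ‖vF W h t‖ₑ := by
    apply lintegral_congr_ae
    filter_upwards [ae_restrict_of_ae hae] with t ht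
    rw [ht]
  rw [← h2, ← ofReal_integral_norm_eq_lintegral_enorm hh,
    ← ofReal_integral_norm_eq_lintegral_enorm hh.restrict,
    ← ENNReal.ofReal_mul hW.le, ← ENNReal.ofReal_mul (by positivity),
    ← ENNReal.ofReal_mul (by positivity), ENNReal.ofReal_le_ofReal_iff (by positivity)] at h1
  linarith

/-- **perfect recovery of band-limited signals from corrupted data.**
Let `W > 0`, let `f ∈ L¹(ℝ)` be nonzero with (distributional) Fourier transform
`f̂(ξ) = ∫ f(t) e^{-iξt} dt` supported in `[-πW, πW]`, and let `Ω ⊆ ℝ` be measurable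
with `ρ_ℝ(Ω, W) = W · sup_t |Ω ∩ [t, t + 1/W]| < 1/π`.  Let the noise `N ∈ L¹(ℝ)`
vanish a.e. outside `Ω`.  Then `f` is the unique minimizer, over all band-limited
`g ∈ L¹(ℝ)`, of `g ↦ ‖(f + N) - g‖₁`: for every such `g`, `‖N‖₁ ≤ ‖(f + N) - g‖₁`,
with strict inequality whenever `g ≠ f` in `L¹(ℝ)`. -/
theorem bandlimited_recovery_l1_minimization
    (W : ℝ) (hW : 0 < W)
    (f : ℝ → ℂ) (hf : Integrable f volume)
    (hf0 : ¬ (f =ᵐ[volume] (0 : ℝ → ℂ)))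
    (hfsupp : ∀ ξ : ℝ, ξ ∉ Set.Icc (-(Real.pi * W)) (Real.pi * W) →
      (∫ t : ℝ, f t * Complex.exp (-(Complex.I * ξ * t))) = 0)
    (Ω : Set ℝ) (hΩ : MeasurableSet Ω)
    (hρ : W * (⨆ t : ℝ, (volume (Ω ∩ Set.Icc t (t + 1 / W))).toReal) < 1 / Real.pi)
    (N : ℝ → ℂ) (hN : Integrable N volume)
    (hNsupp : ∀ᵐ t ∂(volume : Measure ℝ), t ∉ Ω → N t = 0) :
    ∀ g : ℝ → ℂ, Integrable g volume →
      (∀ ξ : ℝ, ξ ∉ Set.Icc (-(Real.pi * W)) (Real.pi * W) →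
        (∫ t : ℝ, g t * Complex.exp (-(Complex.I * ξ * t))) = 0) →
      (∫ t : ℝ, ‖N t‖) ≤ (∫ t : ℝ, ‖(f t + N t) - g t‖) ∧
        (¬ (g =ᵐ[volume] f) →
          (∫ t : ℝ, ‖N t‖) < ∫ t : ℝ, ‖(f t + N t) - g t‖) := by
  intro g hg hgsupp
  have hpi := Real.pi_pos
  have hE : ∀ (u : ℝ → ℂ), Integrable u → ∀ ξ : ℝ,
      Integrable (fun t : ℝ => u t * Complex.exp (-(Complex.I * ξ * t))) := by
    intro u hu ξ
    refine hu.mul_bdd (c := 1) (Continuous.aestronglyMeasurable (by fun_prop)) ?_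
    refine Filter.Eventually.of_forall fun t => ?_
    rw [show -(Complex.I * ξ * t) = ((-(ξ * t) : ℝ) : ℂ) * Complex.I by push_cast; ring,
      Complex.norm_exp_ofReal_mul_I]
  have hh : Integrable (fun t => f t - g t) := hf.sub hg
  have hD := donoho_logan hW hh (fun ξ hξ => by
    simp_rw [sub_mul]
    rw [integral_sub (hE f hf ξ) (hE g hg ξ), hfsupp ξ hξ, hgsupp ξ hξ, sub_zero]) hΩ
  set ρ := W * (⨆ t : ℝ, (volume (Ω ∩ Set.Icc t (t + 1 / W))).toReal)
  have hρ2 : Real.pi / 2 * ρ < 1 / 2 := by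
    rw [lt_div_iff₀ hpi] at hρ
    linarith
  have hsplit := integral_add_compl hΩ hh.norm
  have hX : Integrable (fun t => f t + N t - g t) := (hf.add hN).sub hg
  have hsplitX := integral_add_compl hΩ hX.norm
  have hsplitN := integral_add_compl hΩ hN.norm
  have hNc : ∫ t in Ωᶜ, ‖N t‖ = 0 := by
    apply setIntegral_eq_zero_of_ae_eq_zero
    filter_upwards [hNsupp] with t ht hm
    rw [ht hm, norm_zero]
  have hXc : ∫ t in Ωᶜ, ‖f t + N t - g t‖ = ∫ t in Ωᶜ, ‖f t - g t‖ := by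
    apply setIntegral_congr_ae hΩ.compl
    filter_upwards [hNsupp] with t ht hm
    rw [ht hm, add_zero]
  have hXΩ : ∫ t in Ω, ‖N t‖ ≤ (∫ t in Ω, ‖f t + N t - g t‖) + ∫ t in Ω, ‖f t - g t‖ := by
    rw [← integral_add hX.norm.restrict hh.norm.restrict]
    refine integral_mono hN.norm.restrict (hX.norm.restrict.add hh.norm.restrict) fun t => ?_
    have := norm_sub_le (f t + N t - g t) (f t - g t)
    rwa [show f t + N t - g t - (f t - g t) = N t by ring] at this
  have hn : 0 ≤ ∫ t, ‖f t - g t‖ := integral_nonneg fun _ => norm_nonneg _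
  refine ⟨by nlinarith, fun hne => ?_⟩
  have hpos : 0 < ∫ t, ‖f t - g t‖ := by
    refine lt_of_le_of_ne hn fun h0 => hne ?_
    have := (integral_eq_zero_iff_of_nonneg (fun _ => norm_nonneg _) hh.norm).1 h0.symm
    filter_upwards [this] with t ht
    exact (sub_eq_zero.1 (norm_eq_zero.1 ht)).symm
  nlinarith
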